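/- arXiv:1302.4703 — 2 statements merged into one kernel-verified Lean document; each statement's English description precedes it below -/
import Mathlib

section
/- Let C be a maximal cap in AG(3,3) and let c be any point of AG(3,3) not in C. Then there are exactly 2 unordered pairs {x, y} of distinct points of C with x + y + c = 0; that is, every point outside a maximal cap completes exactly two lines with pairs of points of the cap. -/
/-- A cap in `AG(n,3)`: a finite set of points of `Fin n → ZMod 3` containing no
three distinct collinear points (three distinct points are collinear iff they sum to zero). -/
def IsCap {n : ℕ} (C : Finset (Fin n → ZMod 3)) : Prop :=
  ∀ x ∈ C, ∀ y ∈ C, ∀ z ∈ C, x ≠ y → x ≠ z → y ≠ z → x + y + z ≠ 0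

/-- A maximal cap: a cap of largest possible size. -/
def MaximalCap {n : ℕ} (C : Finset (Fin n → ZMod 3)) : Prop :=
  IsCap C ∧ ∀ D : Finset (Fin n → ZMod 3), IsCap D → D.card ≤ C.card

/-- The six points `± e_i`. -/
def capSix : Finset (Fin 3 → ZMod 3) :=
  {![1,0,0], ![2,0,0], ![0,1,0], ![0,2,0], ![0,0,1], ![0,0,2]}

/-- A label in `0..7` which is injective on caps containing `capSix`. -/
def capLabel (x : Fin 3 → ZMod 3) : ℕ :=
  if x = ![1,0,0] then 0 else if x = ![2,0,0] then 1 else if x = ![0,1,0] then 2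
  else if x = ![0,2,0] then 3 else if x = ![0,0,1] then 4 else if x = ![0,0,2] then 5
  else if x 0 * x 1 * x 2 = 1 then 6 else 7

set_option maxRecDepth 100000 in
theorem cap_aux1 : ∀ x : Fin 3 → ZMod 3, x 0 * x 1 * x 2 ≠ 0 ∨ x ∈ capSix ∨
    ∃ p ∈ capSix, ∃ q ∈ capSix, x ≠ p ∧ x ≠ q ∧ p ≠ q ∧ x + p + q = 0 := by
  decide +kernel

set_option maxRecDepth 100000 in
theorem cap_aux2 : ∀ x : Fin 3 → ZMod 3, (x 0 * x 1 * x 2 ≠ 0 ∨ x ∈ capSix) →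
    ∀ y : Fin 3 → ZMod 3, (y 0 * y 1 * y 2 ≠ 0 ∨ y ∈ capSix) →
    capLabel x = capLabel y → x ≠ y →
    ∃ p ∈ capSix, x ≠ p ∧ y ≠ p ∧ x + y + p = 0 := by
  decide +kernel

theorem cap_with_six (D : Finset (Fin 3 → ZMod 3)) (hD : IsCap D) (h : capSix ⊆ D) :
    D.card ≤ 8 := by
  have hg : ∀ x ∈ D, x 0 * x 1 * x 2 ≠ 0 ∨ x ∈ capSix := by
    intro x hx
    rcases cap_aux1 x with h1 | h1 | ⟨p, hp, q, hq, h1, h2, h3, h4⟩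
    · exact Or.inl h1
    · exact Or.inr h1
    · exact absurd h4 (hD x hx p (h hp) q (h hq) h1 h2 h3)
  have := Finset.card_le_card_of_injOn (s := D) (t := Finset.range 8) capLabel
    (by
      intro x _
      simp only [Finset.coe_range, Set.mem_Iio, capLabel]
      split_ifs <;> norm_num)
    (by
      intro x hx y hy hxy
      by_contra hne
      obtain ⟨p, hp, h1, h2, h3⟩ := cap_aux2 x (hg x hx) y (hg y hy) hxy hne
      exact hD x hx y hy p (h hp) hne h1 h2 h3)
  simpa using this

theorem three_eq_zero_V : (3 : Fin 3 → ZMod 3) = 0 := by decide +kernel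

/-- A cap with three secants through a common point has at most eight points. -/
theorem cap_three_secants (C : Finset (Fin 3 → ZMod 3)) (hC : IsCap C)
    (c a a' b b' d d' : Fin 3 → ZMod 3)
    (ha : a ∈ C) (ha' : a' ∈ C) (hb : b ∈ C) (hb' : b' ∈ C) (hd : d ∈ C) (hd' : d' ∈ C)
    (haa : a ≠ a') (hbb : b ≠ b') (hdd : d ≠ d')
    (sa : a + a' + c = 0) (sb : b + b' + c = 0) (sd : d + d' + c = 0)
    (hab : a ≠ b) (hab' : a ≠ b') (had : a ≠ d) (had' : a ≠ d')
    (ha'b : a' ≠ b) (ha'b' : a' ≠ b') (ha'd : a' ≠ d) (ha'd' : a' ≠ d')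
    (hbd : b ≠ d) (hbd' : b ≠ d') (hb'd : b' ≠ d) (hb'd' : b' ≠ d') :
    C.card ≤ 8 := by
  have h3 := three_eq_zero_V
  let φ : (Fin 3 → ZMod 3) → (Fin 3 → ZMod 3) := fun x =>
    c + x 0 • (a - c) + x 1 • (b - c) + x 2 • (d - c)
  have ker : ∀ i j k : ZMod 3, i • (a - c) + j • (b - c) + k • (d - c) = 0 →
      i = 0 ∧ j = 0 ∧ k = 0 := by
    have e1 : (1 : ZMod 3) ≠ 0 := by decide
    have n1 := hC a ha b hb d hd hab had hbd
    have n2 := hC a ha b hb d' hd' hab had' hbd'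
    have n3 := hC a ha b' hb' d hd hab' had hb'd
    have n4 := hC a ha b' hb' d' hd' hab' had' hb'd'
    have n5 := hC a' ha' b hb d hd ha'b ha'd hbd
    have n6 := hC a' ha' b hb d' hd' ha'b ha'd' hbd'
    have n7 := hC a' ha' b' hb' d hd ha'b' ha'd hb'd
    have n8 := hC a' ha' b' hb' d' hd' ha'b' ha'd' hb'd'
    have two : ∀ v : Fin 3 → ZMod 3, (2 : ZMod 3) • v = -v := by
      intro v; ext i; simp only [Pi.smul_apply, Pi.neg_apply, smul_eq_mul]
      generalize v i = t; revert t; decide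
    have cases3 : ∀ i : ZMod 3, i = 0 ∨ i = 1 ∨ i = 2 := by decide
    intro i j k h
    rcases cases3 i with rfl | rfl | rfl <;> rcases cases3 j with rfl | rfl | rfl <;>
      rcases cases3 k with rfl | rfl | rfl <;>
      simp only [zero_smul, one_smul, two, zero_add, add_zero] at h <;>
      first
      | exact ⟨rfl, rfl, rfl⟩
      | (exfalso; clear two cases3 e1 φ hC; grind)
  have hinj : Function.Injective φ := by
    intro x y hxy
    have h := ker (x 0 - y 0) (x 1 - y 1) (x 2 - y 2) (by
      simp only [φ] at hxy
      simp only [sub_smul]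
      linear_combination hxy)
    ext i
    fin_cases i
    · exact sub_eq_zero.1 h.1
    · exact sub_eq_zero.1 h.2.1
    · exact sub_eq_zero.1 h.2.2
  have hsurj : Function.Surjective φ := Finite.injective_iff_surjective.1 hinj
  have hsum : ∀ x y z, x + y + z = 0 → φ x + φ y + φ z = 0 := by
    intro x y z h
    have h0 := congrFun h 0
    have h1 := congrFun h 1
    have h2 := congrFun h 2
    simp only [Pi.add_apply, Pi.zero_apply] at h0 h1 h2
    have : φ x + φ y + φ z = 3 * c + (x 0 + y 0 + z 0) • (a - c)
      + (x 1 + y 1 + z 1) • (b - c) + (x 2 + y 2 + z 2) • (d - c) := by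
      simp only [φ, add_smul]; ring
    rw [this, h0, h1, h2, h3]; simp
  let D := Finset.univ.filter (fun x => φ x ∈ C)
  have hDC : D.image φ = C := by
    ext y
    simp only [D, Finset.mem_image, Finset.mem_filter, Finset.mem_univ, true_and]
    constructor
    · rintro ⟨x, hx, rfl⟩; exact hx
    · intro hy
      obtain ⟨x, rfl⟩ := hsurj y
      exact ⟨x, hy, rfl⟩
  have hcard : C.card = D.card := by
    rw [← hDC, Finset.card_image_of_injective _ hinj]
  rw [hcard]
  apply cap_with_six
  · intro x hx y hy z hz hxy hxz hyz h
    simp only [D, Finset.mem_filter, Finset.mem_univ, true_and] at hx hy hz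
    exact hC _ hx _ hy _ hz (hinj.ne hxy) (hinj.ne hxz) (hinj.ne hyz) (hsum _ _ _ h)
  · have two : ∀ v : Fin 3 → ZMod 3, (2 : ZMod 3) • v = -v := by
      intro v; ext i; simp only [Pi.smul_apply, Pi.neg_apply, smul_eq_mul]
      generalize v i = t; revert t; decide
    have q1 : φ ![1,0,0] = a := by simp [φ]
    have q2 : φ ![2,0,0] = a' := by
      simp [φ, two]; linear_combination c * h3 - sa
    have q3 : φ ![0,1,0] = b := by simp [φ]
    have q4 : φ ![0,2,0] = b' := by
      simp [φ, two]; linear_combination c * h3 - sb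
    have q5 : φ ![0,0,1] = d := by simp [φ]
    have q6 : φ ![0,0,2] = d' := by
      simp [φ, two]; linear_combination c * h3 - sd
    intro x hx
    simp only [capSix, Finset.mem_insert, Finset.mem_singleton] at hx
    simp only [D, Finset.mem_filter, Finset.mem_univ, true_and]
    rcases hx with rfl | rfl | rfl | rfl | rfl | rfl
    · rwa [q1]
    · rwa [q2]
    · rwa [q3]
    · rwa [q4]
    · rwa [q5]
    · rwa [q6]

theorem cap_le_two (C : Finset (Fin 3 → ZMod 3)) (hC : IsCap C) (h9 : 9 ≤ C.card)
    (c : Fin 3 → ZMod 3) :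
    ((C.powersetCard 2).filter (fun p => (∑ x ∈ p, x) + c = 0)).card ≤ 2 := by
  by_contra hlt
  push Not at hlt
  obtain ⟨p, q, r, hp, hq, hr, hpq, hpr, hqr⟩ := Finset.two_lt_card_iff.1 hlt
  simp only [Finset.mem_filter, Finset.mem_powersetCard] at hp hq hr
  obtain ⟨⟨pC, pc⟩, ps⟩ := hp
  obtain ⟨⟨qC, qc⟩, qs⟩ := hq
  obtain ⟨⟨rC, rc⟩, rs⟩ := hr
  obtain ⟨a, a', haa, rfl⟩ := Finset.card_eq_two.1 pc
  obtain ⟨b, b', hbb, rfl⟩ := Finset.card_eq_two.1 qc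
  obtain ⟨d, d', hdd, rfl⟩ := Finset.card_eq_two.1 rc
  rw [Finset.sum_pair haa] at ps
  rw [Finset.sum_pair hbb] at qs
  rw [Finset.sum_pair hdd] at rs
  -- two secants through `c` sharing a point coincide
  have key : ∀ x x' y y' : Fin 3 → ZMod 3, x + x' + c = 0 → y + y' + c = 0 →
      ({x, x'} : Finset (Fin 3 → ZMod 3)) ≠ {y, y'} →
      x ≠ y ∧ x ≠ y' ∧ x' ≠ y ∧ x' ≠ y' := by
    intro x x' y y' h1 h2 hne
    refine ⟨?_, ?_, ?_, ?_⟩ <;> rintro rfl <;> apply hne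
    · rw [show x' = y' by linear_combination h1 - h2]
    · rw [show x' = y by linear_combination h1 - h2, Finset.pair_comm]
    · rw [show x = y' by linear_combination h1 - h2, Finset.pair_comm]
    · rw [show x = y by linear_combination h1 - h2]
  obtain ⟨k1, k2, k3, k4⟩ := key _ _ _ _ ps qs hpq
  obtain ⟨l1, l2, l3, l4⟩ := key _ _ _ _ ps rs hpr
  obtain ⟨m1, m2, m3, m4⟩ := key _ _ _ _ qs rs hqr
  have := cap_three_secants C hC c a a' b b' d d' (pC (by simp)) (pC (by simp))
    (qC (by simp)) (qC (by simp)) (rC (by simp)) (rC (by simp)) haa hbb hdd ps qs rs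
    k1 k2 l1 l2 k3 k4 l3 l4 m1 m2 m3 m4
  omega

/-- The paraboloid `z = x² + y²`, a cap with nine points. -/
def capNine : Finset (Fin 3 → ZMod 3) :=
  Finset.univ.filter (fun x => x 2 = x 0 * x 0 + x 1 * x 1)

set_option maxRecDepth 100000 in
theorem capNine_card : capNine.card = 9 := by decide +kernel

set_option maxRecDepth 100000 in
theorem capNine_isCap : IsCap capNine := by
  unfold IsCap
  decide +kernel

/-- Every point `c` outside a maximal cap `C` in `AG(3,3)` completes exactly two lines
with pairs of points of the cap: there are exactly 2 two-element subsets `{x, y}` of `C`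
with `x + y + c = 0`. -/
theorem point_outside_maximal_cap_AG33_completes_two_lines
    (C : Finset (Fin 3 → ZMod 3)) (hC : MaximalCap C)
    (c : Fin 3 → ZMod 3) (hc : c ∉ C) :
    ((C.powersetCard 2).filter (fun p => (∑ x ∈ p, x) + c = 0)).card = 2 := by
  obtain ⟨hcap, hmax⟩ := hC
  have h9 : 9 ≤ C.card := capNine_card ▸ hmax _ capNine_isCap
  have h3 := three_eq_zero_V
  have hle := cap_le_two C hcap h9
  have hcount : (C.powersetCard 2).card = ∑ e ∈ Cᶜ,
      ((C.powersetCard 2).filter (fun p => (∑ x ∈ p, x) + e = 0)).card := by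
    rw [Finset.card_eq_sum_card_fiberwise (f := fun p => -(∑ x ∈ p, x)) (t := Cᶜ)]
    · refine Finset.sum_congr rfl fun e _ => ?_
      congr 1
      refine Finset.filter_congr fun p _ => ?_
      exact neg_eq_iff_add_eq_zero
    · intro p hp
      obtain ⟨pC, pc⟩ := Finset.mem_powersetCard.1 (Finset.mem_coe.1 hp)
      obtain ⟨x, y, hxy, rfl⟩ := Finset.card_eq_two.1 pc
      simp only [Finset.sum_pair hxy, Finset.coe_compl, Set.mem_compl_iff, Finset.mem_coe]
      intro hz
      refine hcap x (pC (by simp)) y (pC (by simp)) _ hz hxy ?_ ?_ (by ring)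
      · intro h; apply hxy; linear_combination x * h3 - h
      · intro h; apply hxy; linear_combination h - y * h3
  have hcompl : Cᶜ.card + C.card = 27 := by
    rw [Finset.card_compl_add_card]; simp
  rw [Finset.card_powersetCard] at hcount
  have hub : C.card.choose 2 ≤ Cᶜ.card * 2 := by
    rw [hcount]; exact Finset.sum_le_card_nsmul _ _ _ fun e _ => hle e
  have hlb : 36 ≤ C.card.choose 2 := Nat.choose_le_choose 2 h9
  have heq : ∑ e ∈ Cᶜ, ((C.powersetCard 2).filter (fun p => (∑ x ∈ p, x) + e = 0)).card
      = ∑ e ∈ Cᶜ, 2 := by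
    rw [← hcount, Finset.sum_const, smul_eq_mul]
    omega
  exact (Finset.sum_eq_sum_iff_of_le fun e _ => hle e).1 heq c (Finset.mem_compl.2 hc)
end

section
/- The number of maximal caps S in AG(4,3) whose anchor is the zero vector (equivalently, with ∑_{x∈S} x = 0) is exactly 8424. -/
open Finset in
/-- number of points of `S` on the hyperplane `f · x = c`. -/
def hcnt {n : ℕ} (S : Finset (Fin n → ZMod 3)) (f : Fin n → ZMod 3) (c : ZMod 3) : ℤ :=
  ∑ x ∈ S, if f ⬝ᵥ x = c then 1 else 0

lemma zmod3_sum (F : ZMod 3 → ℤ) : ∑ a, F a = F 0 + F 1 + F 2 := by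
  exact Fin.sum_univ_three F

lemma zmod3_cases (a : ZMod 3) : a = 0 ∨ a = 1 ∨ a = 2 := by
  revert a; decide

lemma sum_dot {n : ℕ} (F : ZMod 3 → ℤ) (w : Fin n → ZMod 3) (hw : w ≠ 0) :
    3 * ∑ f : Fin n → ZMod 3, F (f ⬝ᵥ w) = 3 ^ n * ∑ a, F a := by
  obtain ⟨i, hi⟩ := Function.ne_iff.mp hw
  simp only [Pi.zero_apply] at hi
  have key : ∀ c : ZMod 3, ∑ f : Fin n → ZMod 3, F (f ⬝ᵥ w + c)
      = ∑ f : Fin n → ZMod 3, F (f ⬝ᵥ w) := by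
    intro c
    refine Fintype.sum_equiv (Equiv.addRight (Pi.single i (c * (w i)))) _ _ ?_
    intro f
    have h2 : ∀ a : ZMod 3, a ≠ 0 → a * a = 1 := by decide
    simp [add_dotProduct, single_dotProduct, mul_assoc, h2 _ hi]
  calc 3 * ∑ f : Fin n → ZMod 3, F (f ⬝ᵥ w)
      = ∑ c : ZMod 3, ∑ f : Fin n → ZMod 3, F (f ⬝ᵥ w + c) := by
        simp [key]
    _ = ∑ f : Fin n → ZMod 3, ∑ c : ZMod 3, F (f ⬝ᵥ w + c) := Finset.sum_comm
    _ = ∑ f : Fin n → ZMod 3, ∑ c : ZMod 3, F c := by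
        refine Finset.sum_congr rfl fun f _ => ?_
        exact Fintype.sum_equiv (Equiv.addLeft (f ⬝ᵥ w)) _ _ (fun _ => rfl)
    _ = 3 ^ n * ∑ a, F a := by simp

lemma sum_ind {n : ℕ} (w : Fin n → ZMod 3) :
    3 * ∑ f : Fin n → ZMod 3, (if f ⬝ᵥ w = 0 then (1 : ℤ) else 0)
      = 3 ^ n * (1 + 2 * if w = 0 then 1 else 0) := by
  by_cases hw : w = 0
  · subst hw
    simp
    ring
  · have := sum_dot (fun a => if a = 0 then (1 : ℤ) else 0) w hw
    simp only [this, if_neg hw]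
    simp

lemma fib {n : ℕ} (S : Finset (Fin n → ZMod 3)) (f : Fin n → ZMod 3) (F : ZMod 3 → ℤ) :
    ∑ x ∈ S, F (f ⬝ᵥ x) = hcnt S f 0 * F 0 + hcnt S f 1 * F 1 + hcnt S f 2 * F 2 := by
  simp only [hcnt, Finset.sum_mul, ← Finset.sum_add_distrib]
  refine Finset.sum_congr rfl fun x _ => ?_
  have h01 : (0 : ZMod 3) ≠ 1 := by decide
  have h02 : (0 : ZMod 3) ≠ 2 := by decide
  have h12 : (1 : ZMod 3) ≠ 2 := by decide
  rcases zmod3_cases (f ⬝ᵥ x) with h | h | h <;> rw [h] <;>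
    simp [h01, h02, h12, h01.symm, h02.symm, h12.symm]

lemma hcnt_sum {n : ℕ} (S : Finset (Fin n → ZMod 3)) (f : Fin n → ZMod 3) :
    hcnt S f 0 + hcnt S f 1 + hcnt S f 2 = S.card := by
  have := fib S f (fun _ => 1)
  simp at this
  linarith

lemma hcnt_eq_card {n : ℕ} (S : Finset (Fin n → ZMod 3)) (f : Fin n → ZMod 3) (c : ZMod 3) :
    hcnt S f c = (S.filter (fun x => f ⬝ᵥ x = c)).card := by
  simp [hcnt]

lemma hcnt_nonneg {n : ℕ} (S : Finset (Fin n → ZMod 3)) (f : Fin n → ZMod 3) (c : ZMod 3) :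
    0 ≤ hcnt S f c := by
  rw [hcnt_eq_card]; positivity

lemma quad_eq {n : ℕ} (S : Finset (Fin n → ZMod 3)) (f : Fin n → ZMod 3) :
    ∑ x ∈ S, ∑ y ∈ S, (if f ⬝ᵥ (x - y) = 0 then (1 : ℤ) else 0)
      = hcnt S f 0 ^ 2 + hcnt S f 1 ^ 2 + hcnt S f 2 ^ 2 := by
  simp only [dotProduct_sub]
  rw [fib S f (fun a => ∑ y ∈ S, (if a - f ⬝ᵥ y = 0 then (1 : ℤ) else 0))]
  rw [fib S f (fun b => (if 0 - b = 0 then (1 : ℤ) else 0)),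
    fib S f (fun b => (if 1 - b = 0 then (1 : ℤ) else 0)),
    fib S f (fun b => (if 2 - b = 0 then (1 : ℤ) else 0))]
  norm_num [show (1:ZMod 3) ≠ 0 by decide, show (2:ZMod 3) ≠ 0 by decide, show (1:ZMod 3) - 2 ≠ 0 by decide,
    show (2:ZMod 3) - 1 ≠ 0 by decide]
  ring

lemma trip_eq {n : ℕ} (S : Finset (Fin n → ZMod 3)) (f : Fin n → ZMod 3) :
    ∑ x ∈ S, ∑ y ∈ S, ∑ z ∈ S, (if f ⬝ᵥ (x + y + z) = 0 then (1 : ℤ) else 0)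
      = hcnt S f 0 ^ 3 + hcnt S f 1 ^ 3 + hcnt S f 2 ^ 3
        + 6 * (hcnt S f 0 * hcnt S f 1 * hcnt S f 2) := by
  simp only [dotProduct_add]
  have e : ∀ s : ZMod 3, ∑ z ∈ S, (if s + f ⬝ᵥ z = 0 then (1 : ℤ) else 0)
      = hcnt S f 0 * (if s + 0 = 0 then (1 : ℤ) else 0)
        + hcnt S f 1 * (if s + 1 = 0 then (1 : ℤ) else 0)
        + hcnt S f 2 * (if s + 2 = 0 then (1 : ℤ) else 0) := fun s =>
    fib S f (fun b => (if s + b = 0 then (1 : ℤ) else 0))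
  simp only [e]
  have e2 : ∀ s : ZMod 3, ∑ y ∈ S, (hcnt S f 0 * (if s + f ⬝ᵥ y + 0 = 0 then (1 : ℤ) else 0)
        + hcnt S f 1 * (if s + f ⬝ᵥ y + 1 = 0 then (1 : ℤ) else 0)
        + hcnt S f 2 * (if s + f ⬝ᵥ y + 2 = 0 then (1 : ℤ) else 0)) = _ := fun s =>
    fib S f (fun b => (hcnt S f 0 * (if s + b + 0 = 0 then (1 : ℤ) else 0)
        + hcnt S f 1 * (if s + b + 1 = 0 then (1 : ℤ) else 0)
        + hcnt S f 2 * (if s + b + 2 = 0 then (1 : ℤ) else 0)))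
  simp only [e2]
  rw [fib S f (fun s => hcnt S f 0 * (hcnt S f 0 * (if s + 0 + 0 = 0 then (1 : ℤ) else 0)
        + hcnt S f 1 * (if s + 0 + 1 = 0 then (1 : ℤ) else 0)
        + hcnt S f 2 * (if s + 0 + 2 = 0 then (1 : ℤ) else 0))
     + hcnt S f 1 * (hcnt S f 0 * (if s + 1 + 0 = 0 then (1 : ℤ) else 0)
        + hcnt S f 1 * (if s + 1 + 1 = 0 then (1 : ℤ) else 0)
        + hcnt S f 2 * (if s + 1 + 2 = 0 then (1 : ℤ) else 0))
     + hcnt S f 2 * (hcnt S f 0 * (if s + 2 + 0 = 0 then (1 : ℤ) else 0)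
        + hcnt S f 1 * (if s + 2 + 1 = 0 then (1 : ℤ) else 0)
        + hcnt S f 2 * (if s + 2 + 2 = 0 then (1 : ℤ) else 0)))]
  have d : ∀ a b c : ZMod 3, (if a + b + c = 0 then (1 : ℤ) else 0) =
    if (a.val + b.val + c.val) % 3 = 0 then 1 else 0 := by decide
  simp only [d]
  simp only [show (0 : ZMod 3).val = 0 from rfl, show (1 : ZMod 3).val = 1 from rfl,
    show (2 : ZMod 3).val = 2 from rfl]
  norm_num
  ring

/-- Sum of the squares over all functionals. -/
lemma sum_quad {n : ℕ} (S : Finset (Fin n → ZMod 3)) :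
    3 * ∑ f : Fin n → ZMod 3, (hcnt S f 0 ^ 2 + hcnt S f 1 ^ 2 + hcnt S f 2 ^ 2)
      = 3 ^ n * ((S.card : ℤ) ^ 2 + 2 * S.card) := by
  simp only [← quad_eq]
  rw [Finset.sum_comm]
  simp only [Finset.sum_comm (s := Finset.univ) (t := S)]
  simp only [Finset.mul_sum (s := S), sum_ind]
  simp only [sub_eq_zero, ← Finset.mul_sum, Finset.sum_add_distrib, Finset.sum_ite_eq]
  simp
  ring

lemma sum_zero_cnt {n : ℕ} (S : Finset (Fin n → ZMod 3)) :
    3 * ∑ f : Fin n → ZMod 3, hcnt S f 0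
      = 3 ^ n * ((S.card : ℤ) + 2 * if 0 ∈ S then 1 else 0) := by
  simp only [hcnt]
  rw [Finset.sum_comm]
  simp only [Finset.mul_sum (s := S), sum_ind]
  simp only [← Finset.mul_sum, Finset.sum_add_distrib, Finset.sum_ite_eq']
  simp

lemma sum_trip {n : ℕ} (S : Finset (Fin n → ZMod 3)) (hS : IsCap S) :
    3 * ∑ f : Fin n → ZMod 3, (hcnt S f 0 ^ 3 + hcnt S f 1 ^ 3 + hcnt S f 2 ^ 3
        + 6 * (hcnt S f 0 * hcnt S f 1 * hcnt S f 2))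
      = 3 ^ n * ((S.card : ℤ) ^ 3 + 2 * S.card) := by
  have h : ∀ x ∈ S, ∀ y ∈ S, ∑ z ∈ S, (if x + y + z = 0 then (1 : ℤ) else 0)
      = if x = y then 1 else 0 := by
    intro x hx y hy
    have three : ∀ v : Fin n → ZMod 3, v + v + v = 0 := by
      intro v; ext i; simp only [Pi.add_apply, Pi.zero_apply]
      generalize v i = a; revert a; decide
    by_cases hxy : x = y
    · subst hxy
      have : ∀ z, x + x + z = 0 ↔ x = z := by
        intro z
        constructor
        · intro hz
          have := three x
          exact add_left_cancel (this.trans hz.symm)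
        · rintro rfl; exact three x
      simp [this, hx]
    · rw [if_neg hxy]
      refine Finset.sum_eq_zero fun z hz => ?_
      rw [if_neg]
      intro h0
      by_cases hxz : x = z
      · subst hxz
        have : x + y + x = x + x + x := by rw [h0, three]
        exact hxy (by simpa using (add_left_cancel (add_right_cancel this)).symm)
      by_cases hyz : y = z
      · subst hyz
        have : x + y + y = y + y + y := by rw [h0, three]
        exact hxy (add_right_cancel (add_right_cancel this))
      exact hS x hx y hy z hz hxy hxz hyz h0
  simp only [← trip_eq]
  rw [Finset.sum_comm]
  have : ∀ x, ∑ f : Fin n → ZMod 3, ∑ y ∈ S, ∑ z ∈ S, (if f ⬝ᵥ (x + y + z) = 0 then (1 : ℤ) else 0)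
     = ∑ y ∈ S, ∑ z ∈ S, ∑ f : Fin n → ZMod 3, (if f ⬝ᵥ (x + y + z) = 0 then (1 : ℤ) else 0) := by
    intro x
    rw [Finset.sum_comm]
    refine Finset.sum_congr rfl fun y _ => Finset.sum_comm
  simp only [this, Finset.mul_sum (s := S), sum_ind]
  simp only [← Finset.mul_sum, Finset.sum_add_distrib]
  rw [show ∑ x ∈ S, ∑ y ∈ S, ∑ z ∈ S, (if x + y + z = 0 then (1 : ℤ) else 0) = S.card by
    calc _ = ∑ x ∈ S, ∑ y ∈ S, (if x = y then (1 : ℤ) else 0) :=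
          Finset.sum_congr rfl fun x hx => Finset.sum_congr rfl fun y hy => h x hx y hy
      _ = _ := by simp [Finset.sum_ite_eq]]
  simp
  ring

/-- an even function vanishing at zero has an even sum. -/
lemma even_sum {n : ℕ} (h : (Fin n → ZMod 3) → ℤ) (h0 : h 0 = 0) (hn : ∀ f, h (-f) = h f) :
    Even (∑ f, h f) := by
  rw [← ZMod.intCast_zmod_eq_zero_iff_dvd _ 2 |>.trans even_iff_two_dvd.symm]
  push_cast
  refine Finset.sum_involution (fun f _ => -f) ?_ ?_ ?_ ?_
  · intro f _
    rw [hn]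
    exact CharTwo.add_self_eq_zero _
  · intro f _ hf he
    apply hf
    have : f = 0 := by
      ext i
      have := congrFun he i
      simp only [Pi.neg_apply, Pi.zero_apply] at this ⊢
      generalize f i = a at *
      revert a; decide
    simp [this, h0]
  · simp
  · simp

lemma cap_section {n : ℕ} (S : Finset (Fin (n + 1) → ZMod 3)) (hS : IsCap S)
    (f : Fin (n + 1) → ZMod 3) (hf : f ≠ 0) (c : ZMod 3) :
    ∃ T : Finset (Fin n → ZMod 3), IsCap T ∧ (T.card : ℤ) = hcnt S f c := by
  obtain ⟨i, hi⟩ := Function.ne_iff.mp hf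
  simp only [Pi.zero_apply] at hi
  have inj : ∀ w : Fin (n + 1) → ZMod 3, f ⬝ᵥ w = 0 → (∀ j, w (i.succAbove j) = 0) → w = 0 := by
    intro w h0 hw
    have : f i * w i = 0 := by
      rw [dotProduct, Fin.sum_univ_succAbove _ i] at h0
      simpa [hw] using h0
    have hwi : w i = 0 := by
      revert this hi
      generalize f i = a
      generalize w i = b
      revert a b; decide
    ext k
    rcases Fin.eq_self_or_eq_succAbove i k with rfl | ⟨j, rfl⟩
    · exact hwi
    · exact hw j
  let π : (Fin (n + 1) → ZMod 3) → (Fin n → ZMod 3) := fun x j => x (i.succAbove j)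
  refine ⟨(S.filter (fun x => f ⬝ᵥ x = c)).image π, ?_, ?_⟩
  · intro x hx y hy z hz hxy hxz hyz h0
    simp only [Finset.mem_image, Finset.mem_filter] at hx hy hz
    obtain ⟨x, ⟨hx, fx⟩, rfl⟩ := hx
    obtain ⟨y, ⟨hy, fy⟩, rfl⟩ := hy
    obtain ⟨z, ⟨hz, fz⟩, rfl⟩ := hz
    refine hS x hx y hy z hz (fun h => hxy (by rw [h])) (fun h => hxz (by rw [h]))
      (fun h => hyz (by rw [h])) (inj _ ?_ fun j => congrFun h0 j)
    rw [dotProduct_add, dotProduct_add, fx, fy, fz]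
    clear fx fy fz
    revert c; decide
  · rw [hcnt_eq_card, Finset.card_image_of_injOn]
    intro x hx y hy hxy
    simp only [Finset.coe_filter, Set.mem_ofPred_eq] at hx hy
    refine sub_eq_zero.mp (inj _ ?_ fun j => ?_)
    · rw [dotProduct_sub, hx.2, hy.2, sub_self]
    · exact sub_eq_zero.mpr (congrFun hxy j)

lemma IsCap.subset {n : ℕ} {S T : Finset (Fin n → ZMod 3)} (hS : IsCap S) (h : T ⊆ S) :
    IsCap T := fun x hx y hy z hz => hS x (h hx) y (h hy) z (h hz)

lemma hcnt_zero_fun {n : ℕ} (S : Finset (Fin n → ZMod 3)) :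
    hcnt S 0 0 = S.card ∧ hcnt S 0 1 = 0 ∧ hcnt S 0 2 = 0 := by
  refine ⟨by simp [hcnt], ?_, ?_⟩
  · simp [hcnt]
  · simp [hcnt, show (0 : ZMod 3) ≠ 2 by decide]

lemma cap_bound_one (S : Finset (Fin 1 → ZMod 3)) (hS : IsCap S) : S.card ≤ 2 := by
  by_contra h
  push Not at h
  obtain ⟨a, ha, b, hb, c, hc, hab, hac, hbc⟩ := Finset.two_lt_card.mp h
  refine hS a ha b hb c hc hab hac hbc ?_
  have e : ∀ u v : Fin 1 → ZMod 3, u ≠ v → u 0 ≠ v 0 := by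
    intro u v huv h
    apply huv
    ext i
    rw [Subsingleton.elim i 0, h]
  have h1 := e _ _ hab
  have h2 := e _ _ hac
  have h3 := e _ _ hbc
  ext i
  rw [Subsingleton.elim i 0]
  simp only [Pi.add_apply, Pi.zero_apply]
  generalize a 0 = a at *
  generalize b 0 = b at *
  generalize c 0 = c at *
  clear e
  revert a b c
  decide

/-- Generic induction step: a bound on the hyperplane sections gives a bound in one
dimension more, provided a quadratic moment inequality holds. -/
lemma section_le {n : ℕ} {B : ℕ} (hB : ∀ T : Finset (Fin n → ZMod 3), IsCap T → T.card ≤ B)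
    (S : Finset (Fin (n + 1) → ZMod 3)) (hS : IsCap S)
    (f : Fin (n + 1) → ZMod 3) (hf : f ≠ 0) (c : ZMod 3) : hcnt S f c ≤ B := by
  obtain ⟨T, hT, h⟩ := cap_section S hS f hf c
  rw [← h]
  exact_mod_cast hB T hT

lemma sum_split {n : ℕ} (F : (Fin n → ZMod 3) → ℤ) :
    ∑ f, F f = F 0 + ∑ f ∈ Finset.univ.erase 0, F f :=
  (Finset.add_sum_erase _ _ (Finset.mem_univ _)).symm

lemma card_erase_zero (n : ℕ) :
    ((Finset.univ.erase (0 : Fin n → ZMod 3)).card : ℤ) = 3 ^ n - 1 := by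
  rw [Finset.card_erase_of_mem (Finset.mem_univ _), Finset.card_univ]
  simp only [Fintype.card_pi, ZMod.card, Finset.prod_const, Finset.card_univ, Fintype.card_fin]
  rw [Nat.cast_sub (Nat.one_le_pow _ _ (by norm_num))]
  simp

lemma cap_bound_two (S : Finset (Fin 2 → ZMod 3)) (hS : IsCap S) : S.card ≤ 4 := by
  by_contra h
  push Not at h
  obtain ⟨T, hT, hc⟩ := Finset.exists_subset_card_eq (show 5 ≤ S.card by omega)
  have cT := hS.subset hT
  have hq := sum_quad T
  rw [sum_split] at hq
  obtain ⟨z0, z1, z2⟩ := hcnt_zero_fun T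
  have hle : ∑ f ∈ Finset.univ.erase (0 : Fin 2 → ZMod 3),
      (hcnt T f 0 ^ 2 + hcnt T f 1 ^ 2 + hcnt T f 2 ^ 2)
      ≤ ∑ f ∈ Finset.univ.erase (0 : Fin 2 → ZMod 3), 9 := by
    refine Finset.sum_le_sum fun f hf => ?_
    have hf := Finset.ne_of_mem_erase hf
    have b := section_le cap_bound_one T cT f hf
    have b0 := b 0
    have b1 := b 1
    have b2 := b 2
    have s := hcnt_sum T f
    have p0 := hcnt_nonneg T f 0
    have p1 := hcnt_nonneg T f 1
    have p2 := hcnt_nonneg T f 2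
    rw [hc] at s
    generalize hcnt T f 0 = x at *
    generalize hcnt T f 1 = y at *
    generalize hcnt T f 2 = z at *
    push_cast at *
    obtain rfl : z = 5 - x - y := by linarith
    interval_cases x <;> interval_cases y <;> omega
  rw [Finset.sum_const, nsmul_eq_mul, card_erase_zero] at hle
  rw [z0, z1, z2, hc] at hq
  norm_num at hq hle
  linarith

lemma cap_bound_three (S : Finset (Fin 3 → ZMod 3)) (hS : IsCap S) : S.card ≤ 9 := by
  by_contra h
  push Not at h
  obtain ⟨T, hT, hc⟩ := Finset.exists_subset_card_eq (show 10 ≤ S.card by omega)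
  have cT := hS.subset hT
  have hq := sum_quad T
  rw [sum_split] at hq
  obtain ⟨z0, z1, z2⟩ := hcnt_zero_fun T
  have hle : ∑ f ∈ Finset.univ.erase (0 : Fin 3 → ZMod 3),
      (hcnt T f 0 ^ 2 + hcnt T f 1 ^ 2 + hcnt T f 2 ^ 2)
      ≤ ∑ f ∈ Finset.univ.erase (0 : Fin 3 → ZMod 3), 36 := by
    refine Finset.sum_le_sum fun f hf => ?_
    have hf := Finset.ne_of_mem_erase hf
    have b := section_le cap_bound_two T cT f hf
    have b0 := b 0
    have b1 := b 1
    have b2 := b 2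
    have s := hcnt_sum T f
    have p0 := hcnt_nonneg T f 0
    have p1 := hcnt_nonneg T f 1
    have p2 := hcnt_nonneg T f 2
    rw [hc] at s
    generalize hcnt T f 0 = x at *
    generalize hcnt T f 1 = y at *
    generalize hcnt T f 2 = z at *
    push_cast at *
    obtain rfl : z = 10 - x - y := by linarith
    interval_cases x <;> interval_cases y <;> omega
  rw [Finset.sum_const, nsmul_eq_mul, card_erase_zero] at hle
  rw [z0, z1, z2, hc] at hq
  norm_num at hq hle
  linarith

lemma arith21 (x y z : ℤ) (x0 : 0 ≤ x) (y0 : 0 ≤ y) (z0 : 0 ≤ z) (x9 : x ≤ 9) (y9 : y ≤ 9)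
    (z9 : z ≤ 9) (s : x + y + z = 21) :
    0 ≤ (x ^ 3 + y ^ 3 + z ^ 3 + 6 * (x * y * z)) + 6 * (x ^ 2 + y ^ 2 + z ^ 2) - 3969 ∧
    ((x ^ 3 + y ^ 3 + z ^ 3 + 6 * (x * y * z)) + 6 * (x ^ 2 + y ^ 2 + z ^ 2) - 3969 = 0 →
      24 ∣ x ^ 2 + y ^ 2 + z ^ 2 - 147) := by
  obtain rfl : z = 21 - x - y := by linarith
  interval_cases x <;> interval_cases y <;> omega

lemma hcnt_neg {n : ℕ} (S : Finset (Fin n → ZMod 3)) (f : Fin n → ZMod 3) (c : ZMod 3) :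
    hcnt S (-f) c = hcnt S f (-c) := by
  simp only [hcnt, neg_dotProduct, neg_eq_iff_eq_neg]

lemma cap_bound_four (S : Finset (Fin 4 → ZMod 3)) (hS : IsCap S) : S.card ≤ 20 := by
  by_contra h
  push Not at h
  obtain ⟨T, hT, hc⟩ := Finset.exists_subset_card_eq (show 21 ≤ S.card by omega)
  have cT := hS.subset hT
  have hq := sum_quad T
  have ht := sum_trip T cT
  rw [sum_split] at hq ht
  obtain ⟨z0, z1, z2⟩ := hcnt_zero_fun T
  rw [z0, z1, z2, hc] at hq ht
  have key : ∀ f ∈ Finset.univ.erase (0 : Fin 4 → ZMod 3), _ := fun f hf =>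
    arith21 (hcnt T f 0) (hcnt T f 1) (hcnt T f 2) (hcnt_nonneg T f 0) (hcnt_nonneg T f 1)
    (hcnt_nonneg T f 2) (section_le cap_bound_three T cT f (Finset.ne_of_mem_erase hf) 0)
    (section_le cap_bound_three T cT f (Finset.ne_of_mem_erase hf) 1)
    (section_le cap_bound_three T cT f (Finset.ne_of_mem_erase hf) 2)
    (by rw [hcnt_sum, hc]; rfl)
  have hz := (Finset.sum_eq_zero_iff_of_nonneg (fun f hf => (key f hf).1)).mp (by
    rw [Finset.sum_sub_distrib, Finset.sum_add_distrib, ← Finset.mul_sum, Finset.sum_const,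
      nsmul_eq_mul, card_erase_zero]
    norm_num at hq ht ⊢
    linarith)
  have hev := even_sum (n := 4) (fun f => if f = 0 then 0 else
    (hcnt T f 0 ^ 2 + hcnt T f 1 ^ 2 + hcnt T f 2 ^ 2 - 147) / 24) (by simp) (by
      intro f
      simp only [neg_eq_zero, hcnt_neg]
      rw [show (-1 : ZMod 3) = 2 by decide, show (-2 : ZMod 3) = 1 by decide, neg_zero]
      split_ifs
      · rfl
      · congr 1; ring)
  rw [sum_split] at hev
  simp only [if_true] at hev
  rw [Finset.sum_congr rfl (fun f hf => if_neg (Finset.ne_of_mem_erase hf))] at hev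
  have h24 : 24 * ∑ f ∈ Finset.univ.erase (0 : Fin 4 → ZMod 3),
      (hcnt T f 0 ^ 2 + hcnt T f 1 ^ 2 + hcnt T f 2 ^ 2 - 147) / 24 =
      ∑ f ∈ Finset.univ.erase (0 : Fin 4 → ZMod 3),
      (hcnt T f 0 ^ 2 + hcnt T f 1 ^ 2 + hcnt T f 2 ^ 2 - 147) := by
    rw [Finset.mul_sum]
    refine Finset.sum_congr rfl fun f hf => ?_
    exact Int.mul_ediv_cancel' ((key f hf).2 (hz f hf))
  rw [Finset.sum_sub_distrib, Finset.sum_const, nsmul_eq_mul, card_erase_zero] at h24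
  norm_num at hq h24 hev
  obtain ⟨k, hk⟩ := hev
  rw [hk] at h24
  omega

/-- the nontrivial odd character-like function on `ZMod 3`. -/
def chi3 (a : ZMod 3) : ℤ := if a = 1 then 1 else if a = 2 then -1 else 0

lemma chi3_cast (a : ZMod 3) : ((chi3 a : ℤ) : ZMod 3) = a := by revert a; decide

lemma chi3_neg (a : ZMod 3) : chi3 (-a) = - chi3 a := by revert a; decide

lemma chi3_sum {n : ℕ} (S : Finset (Fin n → ZMod 3)) (f : Fin n → ZMod 3) :
    ∑ x ∈ S, chi3 (f ⬝ᵥ x) = hcnt S f 1 - hcnt S f 2 := by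
  rw [fib]
  rw [show chi3 0 = 0 by decide, show chi3 1 = 1 by decide, show chi3 2 = -1 by decide]
  ring

lemma three_dvd {n : ℕ} (S : Finset (Fin n → ZMod 3)) (hs : ∑ x ∈ S, x = 0)
    (f : Fin n → ZMod 3) : (3 : ℤ) ∣ hcnt S f 1 - hcnt S f 2 := by
  rw [← chi3_sum]
  refine (ZMod.intCast_zmod_eq_zero_iff_dvd _ 3).mp ?_
  push_cast
  simp only [chi3_cast]
  rw [← dotProduct_sum, hs, dotProduct_zero]

lemma chi3_orth {n : ℕ} (x y : Fin n → ZMod 3) :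
    3 * ∑ f : Fin n → ZMod 3, chi3 (f ⬝ᵥ x) * chi3 (f ⬝ᵥ y)
      = 3 ^ n * 2 * ((if x = y then 1 else 0) - (if x = -y then 1 else 0)) := by
  have h : ∀ a b : ZMod 3, chi3 a * chi3 b =
    (if a - b = 0 then 1 else 0) - (if a + b = 0 then 1 else 0) := by decide
  have h1 := sum_ind (x - y)
  have h2 := sum_ind (x + y)
  simp only [dotProduct_sub, dotProduct_add, sub_eq_zero, add_eq_zero_iff_eq_neg] at h1 h2
  simp only [h, Finset.sum_sub_distrib, mul_sub, sub_eq_zero, add_eq_zero_iff_eq_neg]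
  rw [h1, h2]
  ring

lemma arith20 (x y z : ℤ) (x0 : 0 ≤ x) (y0 : 0 ≤ y) (z0 : 0 ≤ z) (x9 : x ≤ 9) (y9 : y ≤ 9)
    (z9 : z ≤ 9) (s : x + y + z = 20) (d : 3 ∣ y - z) :
    0 ≤ (x ^ 3 + y ^ 3 + z ^ 3 + 6 * (x * y * z)) + 6 * (x ^ 2 + y ^ 2 + z ^ 2) - 9 * x - 3416 ∧
    ((x ^ 3 + y ^ 3 + z ^ 3 + 6 * (x * y * z)) + 6 * (x ^ 2 + y ^ 2 + z ^ 2) - 9 * x - 3416 = 0 →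
      2 ∣ y - z ∧ (y = z → x = 2 ∨ x = 6 ∨ x = 8)) := by
  obtain rfl : z = 20 - x - y := by linarith
  interval_cases x <;> interval_cases y <;> omega

/-- caps of size 20 with sum zero -/
def Good (S : Finset (Fin 4 → ZMod 3)) : Prop := IsCap S ∧ S.card = 20 ∧ ∑ x ∈ S, x = 0

lemma Good.basic {S : Finset (Fin 4 → ZMod 3)} (h : Good S) :
    (0 : Fin 4 → ZMod 3) ∉ S ∧ ∀ f : Fin 4 → ZMod 3, f ≠ 0 → 2 ∣ hcnt S f 1 - hcnt S f 2 ∧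
      (hcnt S f 1 = hcnt S f 2 → hcnt S f 0 = 2 ∨ hcnt S f 0 = 6 ∨ hcnt S f 0 = 8) := by
  obtain ⟨cS, hc, hs⟩ := h
  have hq := sum_quad S
  have ht := sum_trip S cS
  have hl := sum_zero_cnt S
  rw [sum_split] at hq ht hl
  obtain ⟨z0, z1, z2⟩ := hcnt_zero_fun S
  rw [z0, z1, z2, hc] at hq ht
  rw [z0, hc] at hl
  have key : ∀ f ∈ Finset.univ.erase (0 : Fin 4 → ZMod 3), _ := fun f hf =>
    arith20 (hcnt S f 0) (hcnt S f 1) (hcnt S f 2) (hcnt_nonneg S f 0) (hcnt_nonneg S f 1)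
    (hcnt_nonneg S f 2) (section_le cap_bound_three S cS f (Finset.ne_of_mem_erase hf) 0)
    (section_le cap_bound_three S cS f (Finset.ne_of_mem_erase hf) 1)
    (section_le cap_bound_three S cS f (Finset.ne_of_mem_erase hf) 2)
    (by rw [hcnt_sum, hc]; rfl) (three_dvd S hs f)
  have hsum : ∑ f ∈ Finset.univ.erase (0 : Fin 4 → ZMod 3),
      ((hcnt S f 0 ^ 3 + hcnt S f 1 ^ 3 + hcnt S f 2 ^ 3
        + 6 * (hcnt S f 0 * hcnt S f 1 * hcnt S f 2)) +
        6 * (hcnt S f 0 ^ 2 + hcnt S f 1 ^ 2 + hcnt S f 2 ^ 2) - 9 * hcnt S f 0 - 3416)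
      = - 486 * (if (0 : Fin 4 → ZMod 3) ∈ S then 1 else 0) := by
    rw [Finset.sum_sub_distrib, Finset.sum_sub_distrib, Finset.sum_add_distrib, ← Finset.mul_sum,
      ← Finset.mul_sum, Finset.sum_const, nsmul_eq_mul, card_erase_zero]
    norm_num only at hq ht hl ⊢
    linarith
  have h0 : (0 : Fin 4 → ZMod 3) ∉ S := by
    intro h0
    have := Finset.sum_nonneg (fun f hf => (key f hf).1)
    rw [hsum, if_pos h0] at this
    norm_num at this
  refine ⟨h0, fun f hf => ?_⟩
  rw [if_neg h0] at hsum
  have hz := (Finset.sum_eq_zero_iff_of_nonneg (fun f hf => (key f hf).1)).mp (by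
    rw [hsum]; norm_num)
  have hm := Finset.mem_erase.mpr ⟨hf, Finset.mem_univ f⟩
  exact (key f hm).2 (hz f hm)

lemma Good.neg_mem {S : Finset (Fin 4 → ZMod 3)} (h : Good S) {x : Fin 4 → ZMod 3} (hx : x ∈ S) :
    -x ∈ S := by
  by_contra hn
  obtain ⟨-, hb⟩ := h.basic
  have hsum : 3 * ∑ f : Fin 4 → ZMod 3, (hcnt S f 1 - hcnt S f 2) * chi3 (f ⬝ᵥ x) = 162 := by
    simp only [← chi3_sum, Finset.sum_mul]
    rw [Finset.sum_comm, Finset.mul_sum]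
    simp only [chi3_orth]
    rw [← Finset.mul_sum, Finset.sum_sub_distrib, Finset.sum_ite_eq', Finset.sum_ite_eq',
      if_pos hx, if_neg hn]
    norm_num
  have hd : ∀ f : Fin 4 → ZMod 3, 2 ∣ hcnt S f 1 - hcnt S f 2 := by
    intro f
    by_cases hf : f = 0
    · subst hf
      obtain ⟨z0, z1, z2⟩ := hcnt_zero_fun S
      rw [z1, z2]; norm_num
    · exact (hb f hf).1
  have hev := even_sum (n := 4) (fun f => (hcnt S f 1 - hcnt S f 2) / 2 * chi3 (f ⬝ᵥ x))
    (by simp [show chi3 0 = 0 by decide]) (by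
      intro f
      simp only [hcnt_neg, neg_dotProduct, chi3_neg]
      rw [show (-1 : ZMod 3) = 2 by decide, show (-2 : ZMod 3) = 1 by decide]
      obtain ⟨k, hk⟩ := hd f
      rw [show hcnt S f 2 - hcnt S f 1 = 2 * (-k) by linarith, hk,
        Int.mul_ediv_cancel_left _ (by norm_num), Int.mul_ediv_cancel_left _ (by norm_num)]
      ring)
  have h2 : ∑ f : Fin 4 → ZMod 3, (hcnt S f 1 - hcnt S f 2) * chi3 (f ⬝ᵥ x)
      = 2 * ∑ f : Fin 4 → ZMod 3, (hcnt S f 1 - hcnt S f 2) / 2 * chi3 (f ⬝ᵥ x) := by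
    rw [Finset.mul_sum]
    refine Finset.sum_congr rfl fun f _ => ?_
    rw [← mul_assoc, Int.mul_ediv_cancel' (hd f)]
  obtain ⟨k, hk⟩ := hev
  rw [h2, hk] at hsum
  omega

lemma Good.hcnt_symm {S : Finset (Fin 4 → ZMod 3)} (h : Good S) (f : Fin 4 → ZMod 3) :
    hcnt S f 1 = hcnt S f 2 := by
  have : hcnt S f 1 = hcnt S (-f) 1 := by
    simp only [hcnt]
    refine Finset.sum_nbij' (fun x => -x) (fun x => -x) (fun x hx => h.neg_mem hx)
      (fun x hx => h.neg_mem hx) (by simp) (by simp) (by simp)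
  rw [this, hcnt_neg, show (-1 : ZMod 3) = 2 by decide]

lemma Good.hcnt_vals {S : Finset (Fin 4 → ZMod 3)} (h : Good S) (f : Fin 4 → ZMod 3)
    (hf : f ≠ 0) : hcnt S f 0 = 2 ∨ hcnt S f 0 = 6 ∨ hcnt S f 0 = 8 :=
  (h.basic.2 f hf).2 (h.hcnt_symm f)

/-- There are exactly 20 tangent functionals. -/
lemma Good.tangents {S : Finset (Fin 4 → ZMod 3)} (h : Good S) :
    ∑ f : Fin 4 → ZMod 3, (if hcnt S f 0 = 2 then (1 : ℤ) else 0) = 20 := by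
  have hq := sum_quad S
  have hl := sum_zero_cnt S
  rw [sum_split] at hq hl ⊢
  obtain ⟨z0, z1, z2⟩ := hcnt_zero_fun S
  rw [z0, z1, z2, h.2.1] at hq
  rw [z0, h.2.1, if_neg h.basic.1] at hl
  rw [z0, h.2.1]
  have e : ∀ f ∈ Finset.univ.erase (0 : Fin 4 → ZMod 3),
      36 * (if hcnt S f 0 = 2 then (1 : ℤ) else 0) =
      (hcnt S f 0 ^ 2 + hcnt S f 1 ^ 2 + hcnt S f 2 ^ 2) - 136 + (8 - hcnt S f 0) := by
    intro f hf
    have hs := hcnt_sum S f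
    have hy := h.hcnt_symm f
    rw [h.2.1] at hs
    rcases h.hcnt_vals f (Finset.ne_of_mem_erase hf) with h0 | h0 | h0
    · have h1 : hcnt S f 1 = 9 := by push_cast at hs; linarith
      rw [← hy, h0, h1]; norm_num
    · have h1 : hcnt S f 1 = 7 := by push_cast at hs; linarith
      rw [← hy, h0, h1]; norm_num
    · have h1 : hcnt S f 1 = 6 := by push_cast at hs; linarith
      rw [← hy, h0, h1]; norm_num
  have e2 := Finset.sum_congr rfl e
  rw [← Finset.mul_sum, Finset.sum_add_distrib, Finset.sum_sub_distrib, Finset.sum_sub_distrib,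
    Finset.sum_const, Finset.sum_const, nsmul_eq_mul, nsmul_eq_mul, card_erase_zero] at e2
  norm_num at hq hl e2 ⊢
  linarith

/-- no line of `AG(2,3)` has `g`-sum zero -/
def LineOK (g : ZMod 3 → ZMod 3 → ZMod 3) : Prop :=
  ∀ a b c d : ZMod 3, ¬ (a = c ∧ b = d) → g a b + g c d + g (-a - c) (-b - d) ≠ 0

instance (g : ZMod 3 → ZMod 3 → ZMod 3) : Decidable (LineOK g) := by
  unfold LineOK; infer_instance

/-- Test that a sum is nonzero modulo three. -/
def nz (a b c : ℕ) : Bool := !(Nat.beq ((a + b + c) % 3) 0)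

def ok9 (a b c d e f g h i : ℕ) : Bool :=
  nz a b c && nz d e f && nz g h i && nz a d g && nz b e h && nz c f i &&
  nz a e i && nz b f g && nz c d h && nz a f h && nz b d i && nz c e g

def s3 (F : ℕ → ℕ) : ℕ := F 0 + F 1 + F 2

lemma sum_val (F : ℕ → ℕ) : ∑ a : ZMod 3, F a.val = s3 F := Fin.sum_univ_three _

def cnt9 : ℕ := s3 fun a => s3 fun b => s3 fun c => s3 fun d => s3 fun e => s3 fun f =>
  s3 fun g => s3 fun h => s3 fun i => bif ok9 a b c d e f g h i then 1 else 0

set_option maxRecDepth 100000 in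
lemma cnt9_eq : cnt9 = 162 := by decide +kernel

lemma nz_iff (a b c : ZMod 3) : nz a.val b.val c.val = true ↔ a + b + c ≠ 0 := by
  revert a b c; decide

set_option maxHeartbeats 4000000 in
lemma lineOK_iff (g : ZMod 3 → ZMod 3 → ZMod 3) :
    LineOK g ↔ ok9 (g 0 0).val (g 0 1).val (g 0 2).val (g 1 0).val (g 1 1).val (g 1 2).val
      (g 2 0).val (g 2 1).val (g 2 2).val = true := by
  simp only [ok9, Bool.and_eq_true, nz_iff]
  constructor
  · intro h
    refine ⟨⟨⟨⟨⟨⟨⟨⟨⟨⟨⟨?_, ?_⟩, ?_⟩, ?_⟩, ?_⟩, ?_⟩, ?_⟩, ?_⟩, ?_⟩, ?_⟩, ?_⟩, ?_⟩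
    · exact h 0 0 0 1 (by decide)
    · exact h 1 0 1 1 (by decide)
    · exact h 2 0 2 1 (by decide)
    · exact h 0 0 1 0 (by decide)
    · exact h 0 1 1 1 (by decide)
    · exact h 0 2 1 2 (by decide)
    · exact h 0 0 1 1 (by decide)
    · exact h 0 1 1 2 (by decide)
    · exact h 0 2 1 0 (by decide)
    · exact h 0 0 1 2 (by decide)
    · exact h 0 1 1 0 (by decide)
    · exact h 0 2 1 1 (by decide)
  · rintro ⟨⟨⟨⟨⟨⟨⟨⟨⟨⟨⟨h1, h2⟩, h3⟩, h4⟩, h5⟩, h6⟩, h7⟩, h8⟩, h9⟩, h10⟩, h11⟩, h12⟩ a b c d hne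
    have e00 : (-0 - 0 : ZMod 3) = 0 := by decide
    have e01 : (-0 - 1 : ZMod 3) = 2 := by decide
    have e02 : (-0 - 2 : ZMod 3) = 1 := by decide
    have e10 : (-1 - 0 : ZMod 3) = 2 := by decide
    have e11 : (-1 - 1 : ZMod 3) = 1 := by decide
    have e12 : (-1 - 2 : ZMod 3) = 0 := by decide
    have e20 : (-2 - 0 : ZMod 3) = 1 := by decide
    have e21 : (-2 - 1 : ZMod 3) = 0 := by decide
    have e22 : (-2 - 2 : ZMod 3) = 2 := by decide
    rcases zmod3_cases a with rfl | rfl | rfl <;> rcases zmod3_cases b with rfl | rfl | rfl <;>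
    rcases zmod3_cases c with rfl | rfl | rfl <;> rcases zmod3_cases d with rfl | rfl | rfl <;>
    first
    | exact absurd ⟨rfl, rfl⟩ hne
    | (simp only [e00, e01, e02, e10, e11, e12, e20, e21, e22]
       intro h0
       first
       | exact h1 (by linear_combination h0)
       | exact h2 (by linear_combination h0)
       | exact h3 (by linear_combination h0)
       | exact h4 (by linear_combination h0)
       | exact h5 (by linear_combination h0)
       | exact h6 (by linear_combination h0)
       | exact h7 (by linear_combination h0)
       | exact h8 (by linear_combination h0)
       | exact h9 (by linear_combination h0)
       | exact h10 (by linear_combination h0)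
       | exact h11 (by linear_combination h0)
       | exact h12 (by linear_combination h0))

/-- triples as functions -/
def tri : (ZMod 3 → ZMod 3 → ZMod 3) ≃
    ZMod 3 × ZMod 3 × ZMod 3 × ZMod 3 × ZMod 3 × ZMod 3 × ZMod 3 × ZMod 3 × ZMod 3 where
  toFun g := (g 0 0, g 0 1, g 0 2, g 1 0, g 1 1, g 1 2, g 2 0, g 2 1, g 2 2)
  invFun t := fun i j =>
    if i = 0 then (if j = 0 then t.1 else if j = 1 then t.2.1 else t.2.2.1)
    else if i = 1 then (if j = 0 then t.2.2.2.1 else if j = 1 then t.2.2.2.2.1 else t.2.2.2.2.2.1)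
    else (if j = 0 then t.2.2.2.2.2.2.1 else if j = 1 then t.2.2.2.2.2.2.2.1
      else t.2.2.2.2.2.2.2.2)
  left_inv g := by
    funext i j
    rcases zmod3_cases i with rfl | rfl | rfl <;> rcases zmod3_cases j with rfl | rfl | rfl <;> rfl
  right_inv t := rfl

lemma card_lineOK : (Finset.univ.filter LineOK).card = 162 := by
  rw [Finset.card_filter]
  simp only [lineOK_iff]
  refine (Fintype.sum_equiv tri _ (fun t => if ok9 t.1.val t.2.1.val t.2.2.1.val t.2.2.2.1.val
    t.2.2.2.2.1.val t.2.2.2.2.2.1.val t.2.2.2.2.2.2.1.val t.2.2.2.2.2.2.2.1.val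
    t.2.2.2.2.2.2.2.2.val = true then 1 else 0) (fun g => rfl)).trans ?_
  simp only [Fintype.sum_prod_type]
  rw [← cnt9_eq, cnt9]
  simp only [← sum_val, Bool.cond_eq_ite]

/-- the base point of the standard flag -/
def e3 : Fin 4 → ZMod 3 := ![0, 0, 1, 0]

/-- the functional of the standard flag -/
def e4 : Fin 4 → ZMod 3 := ![0, 0, 0, 1]

lemma e4_dot (x : Fin 4 → ZMod 3) : e4 ⬝ᵥ x = x 3 := by
  simp [e4, dotProduct, Fin.sum_univ_four]

/-- the symmetric set attached to a function on the affine plane -/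
def Sg (g : ZMod 3 → ZMod 3 → ZMod 3) : Finset (Fin 4 → ZMod 3) :=
  Finset.univ.filter (fun v => if v 3 = 0 then v 0 = 0 ∧ v 1 = 0 ∧ v 2 ≠ 0
    else v 3 * v 2 = g (v 3 * v 0) (v 3 * v 1))

lemma mem_Sg (g : ZMod 3 → ZMod 3 → ZMod 3) (v : Fin 4 → ZMod 3) :
    v ∈ Sg g ↔ if v 3 = 0 then v 0 = 0 ∧ v 1 = 0 ∧ v 2 ≠ 0
    else v 3 * v 2 = g (v 3 * v 0) (v 3 * v 1) := by simp [Sg]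

/-- coordinates, with the third one last -/
def quadE : (Fin 4 → ZMod 3) ≃ ZMod 3 × ZMod 3 × ZMod 3 × ZMod 3 where
  toFun v := (v 0, v 1, v 3, v 2)
  invFun t := ![t.1, t.2.1, t.2.2.2, t.2.2.1]
  left_inv v := by funext i; fin_cases i <;> rfl
  right_inv t := rfl

lemma inner_cnt (a b d G : ZMod 3) :
    (∑ c : ZMod 3, if (if d = 0 then a = 0 ∧ b = 0 ∧ c ≠ 0 else d * c = G) then 1 else 0)
     = (if d = 0 then (if a = 0 ∧ b = 0 then 2 else 0) else 1 : ℕ) := by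
  revert a b d G; decide

lemma card_Sg (g : ZMod 3 → ZMod 3 → ZMod 3) : (Sg g).card = 20 := by
  rw [Sg, Finset.card_filter]
  refine (Fintype.sum_equiv quadE _ (fun t => if (if t.2.2.1 = 0 then
    t.1 = 0 ∧ t.2.1 = 0 ∧ t.2.2.2 ≠ 0 else t.2.2.1 * t.2.2.2 = g (t.2.2.1 * t.1) (t.2.2.1 * t.2.1))
    then 1 else 0) (fun g => rfl)).trans ?_
  simp only [Fintype.sum_prod_type]
  simp only [inner_cnt]
  decide

lemma neg_mem_Sg (g : ZMod 3 → ZMod 3 → ZMod 3) {v : Fin 4 → ZMod 3} (h : v ∈ Sg g) :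
    -v ∈ Sg g := by
  rw [mem_Sg] at *
  simpa using h

lemma sum_Sg (g : ZMod 3 → ZMod 3 → ZMod 3) : ∑ x ∈ Sg g, x = 0 := by
  have h : ∑ x ∈ Sg g, x = ∑ x ∈ Sg g, -x :=
    Finset.sum_nbij' (fun x => -x) (fun x => -x) (fun x hx => neg_mem_Sg g hx)
      (fun x hx => neg_mem_Sg g hx) (fun x _ => neg_neg x) (fun x _ => neg_neg x)
      (fun x _ => (neg_neg x).symm)
  rw [Finset.sum_neg_distrib] at h
  funext i
  have hi := congrFun h i
  simp only [Pi.neg_apply, Pi.zero_apply] at hi ⊢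
  have key : ∀ a : ZMod 3, a = -a → a = 0 := by decide
  exact key _ hi

lemma e3_mem_Sg (g : ZMod 3 → ZMod 3 → ZMod 3) : e3 ∈ Sg g := by
  rw [mem_Sg]; simp [e3]

lemma hcnt_Sg (g : ZMod 3 → ZMod 3 → ZMod 3) : hcnt (Sg g) e4 0 = 2 := by
  have : (Sg g).filter (fun x => e4 ⬝ᵥ x = 0) = {e3, -e3} := by
    ext v
    rw [Finset.mem_filter, mem_Sg, e4_dot]
    simp only [Finset.mem_insert, Finset.mem_singleton]
    constructor
    · rintro ⟨h, h3⟩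
      rw [if_pos h3] at h
      obtain ⟨h0, h1, h2⟩ := h
      rcases zmod3_cases (v 2) with h | h | h
      · exact absurd h h2
      · left; funext i; fin_cases i <;> simp [e3, *]
      · right; funext i; fin_cases i <;> simp [e3, *]; decide
    · rintro (rfl | rfl) <;> simp [e3]
  rw [hcnt_eq_card, this]
  decide

lemma Sg_aux (g : ZMod 3 → ZMod 3 → ZMod 3) {x y z : Fin 4 → ZMod 3} (hx : x ∈ Sg g)
    (hy : y ∈ Sg g) (hz : z ∈ Sg g) (h : x + y + z = 0) (h3 : x 3 = 0) (h3' : y 3 ≠ 0) : False := by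
  have hi : ∀ i, z i = -x i - y i := fun i => by
    have := congrFun h i
    simp only [Pi.add_apply, Pi.zero_apply] at this
    linear_combination this
  rw [mem_Sg] at hx hy hz
  rw [if_pos h3] at hx
  rw [if_neg h3'] at hy
  obtain ⟨h0, h1, h2⟩ := hx
  rw [hi 0, hi 1, hi 2, hi 3, h0, h1, h3, if_neg (by simpa using h3')] at hz
  have e : ∀ a b : ZMod 3, (-0 - a) * (-0 - b) = a * b := fun a b => by ring
  rw [e, e, ← hy] at hz
  apply h2
  generalize x 2 = a at *
  generalize y 2 = b at *
  generalize y 3 = c at *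
  clear * - hz h3'
  revert a b c; decide

lemma zmod3_mul_cancel {a b c : ZMod 3} (h : a ≠ 0) (h' : a * b = a * c) : b = c := by
  revert a b c; decide

lemma isCap_Sg (g : ZMod 3 → ZMod 3 → ZMod 3) (hg : LineOK g) : IsCap (Sg g) := by
  intro x hx y hy z hz hxy hxz hyz h
  have hi : ∀ i, z i = -x i - y i := fun i => by
    have := congrFun h i
    simp only [Pi.add_apply, Pi.zero_apply] at this
    linear_combination this
  by_cases x3 : x 3 = 0
  · by_cases y3 : y 3 = 0
    · have z3 : z 3 = 0 := by rw [hi, x3, y3]; simp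
      rw [mem_Sg] at hx hy hz
      rw [if_pos ‹_›] at hx hy hz
      obtain ⟨x0, x1, x2⟩ := hx
      obtain ⟨y0, y1, y2⟩ := hy
      obtain ⟨z0, z1, z2⟩ := hz
      apply hxy
      have h2 : x 2 = y 2 := by
        rw [hi] at z2
        generalize x 2 = a at *
        generalize y 2 = b at *
        clear * - x2 y2 z2
        revert a b; decide
      funext i; fin_cases i <;> simp [*]
    · exact Sg_aux g hx hy hz h x3 y3
  · by_cases y3 : y 3 = 0
    · exact Sg_aux g hy hx hz (by rw [← h]; abel) y3 x3
    · by_cases z3 : z 3 = 0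
      · exact Sg_aux g hz hx hy (by rw [← h]; abel) z3 x3
      · have e1 : y 3 = x 3 := by
          rw [hi] at z3
          generalize x 3 = a at *
          generalize y 3 = b at *
          clear * - x3 y3 z3
          revert a b; decide
        have e2 : z 3 = x 3 := by
          rw [hi, e1]
          generalize x 3 = a
          revert a; decide
        rw [mem_Sg] at hx hy hz
        rw [if_neg ‹_›] at hx hy hz
        rw [e1] at hy
        rw [e2] at hz
        refine hg (x 3 * x 0) (x 3 * x 1) (x 3 * y 0) (x 3 * y 1) ?_ ?_
        · rintro ⟨k0, k1⟩
          rw [k0, k1, ← hy] at hx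
          apply hxy
          have k0 := zmod3_mul_cancel x3 k0
          have k1 := zmod3_mul_cancel x3 k1
          have k2 := zmod3_mul_cancel x3 hx
          funext i; fin_cases i <;> simp [*]
        · rw [hi 0, hi 1, hi 2] at hz
          rw [show -(x 3 * x 0) - x 3 * y 0 = x 3 * (-x 0 - y 0) by ring,
            show -(x 3 * x 1) - x 3 * y 1 = x 3 * (-x 1 - y 1) by ring, ← hx, ← hy, ← hz]
          ring

lemma good_Sg (g : ZMod 3 → ZMod 3 → ZMod 3) (hg : LineOK g) : Good (Sg g) :=
  ⟨isCap_Sg g hg, card_Sg g, sum_Sg g⟩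

lemma Sg_injective : Function.Injective Sg := by
  intro g g' h
  funext a b
  have h1 : (![a, b, g a b, 1] : Fin 4 → ZMod 3) ∈ Sg g := by
    rw [mem_Sg]; simp
  rw [h, mem_Sg] at h1
  simpa using h1

lemma exists_Sg {S : Finset (Fin 4 → ZMod 3)} (hS : Good S) (h3 : e3 ∈ S)
    (h4 : hcnt S e4 0 = 2) : ∃ g, LineOK g ∧ Sg g = S := by
  obtain ⟨cS, hc, hs⟩ := id hS
  have hn3 : -e3 ∈ S := hS.neg_mem h3
  have h1 : hcnt S e4 1 = 9 := by
    have a := hS.hcnt_symm e4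
    have b := hcnt_sum S e4
    rw [hc] at b
    push_cast at b
    omega
  rw [hcnt_eq_card] at h1
  have inj : ∀ x ∈ S, ∀ y ∈ S, x 3 = 1 → y 3 = 1 → x 0 = y 0 → x 1 = y 1 → x = y := by
    intro x hx y hy x3 y3 k0 k1
    by_contra hne
    have k2 : x 2 ≠ y 2 := by
      intro k2
      apply hne
      funext i; fin_cases i <;> simp [*]
    have key : ∃ e ∈ S, e 3 = 0 ∧ x + -y + e = 0 := by
      have : y 2 - x 2 = 1 ∨ y 2 - x 2 = 2 := by
        generalize x 2 = a at *
        generalize y 2 = b at *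
        clear * - k2
        revert a b; decide
      rcases this with h | h
      · refine ⟨e3, h3, by simp [e3], ?_⟩
        funext i; fin_cases i <;> simp [e3, *]
        linear_combination -h
      · refine ⟨-e3, hn3, by simp [e3], ?_⟩
        funext i; fin_cases i <;> simp [e3, *]
        have : (3 : ZMod 3) = 0 := by decide
        linear_combination -h - this
    obtain ⟨e, he, e0, hsum⟩ := key
    refine cS x hx (-y) (hS.neg_mem hy) e he ?_ ?_ ?_ hsum
    · intro h
      have := congrFun h 3
      rw [Pi.neg_apply, x3, y3] at this
      revert this; decide
    · intro h
      have := congrFun h 3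
      rw [x3, e0] at this
      revert this; decide
    · intro h
      have := congrFun h 3
      rw [Pi.neg_apply, y3, e0] at this
      revert this; decide
  have himg : ((S.filter (fun x => e4 ⬝ᵥ x = 1)).image (fun x => (x 0, x 1))) = Finset.univ := by
    apply Finset.eq_univ_of_card
    rw [Finset.card_image_of_injOn]
    · have : Fintype.card (ZMod 3 × ZMod 3) = 9 := by simp [ZMod.card]
      rw [this]; exact_mod_cast h1
    · intro x hx y hy hxy
      simp only [Finset.coe_filter, Set.mem_ofPred_eq, e4_dot, Prod.mk.injEq] at hx hy hxy
      exact inj x hx.1 y hy.1 hx.2 hy.2 hxy.1 hxy.2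
  have hP : ∀ a b : ZMod 3, ∃ c, (![a, b, c, 1] : Fin 4 → ZMod 3) ∈ S := by
    intro a b
    have hm := Finset.mem_univ (a, b)
    rw [← himg, Finset.mem_image] at hm
    obtain ⟨x, hx, hab⟩ := hm
    rw [Finset.mem_filter, e4_dot] at hx
    simp only [Prod.mk.injEq] at hab
    refine ⟨x 2, ?_⟩
    convert hx.1
    funext i; fin_cases i <;> simp [*]
  choose g hg using hP
  refine ⟨g, ?_, ?_⟩
  · intro a b c d hne h0
    have h30 : (1 + 1 + 1 : ZMod 3) = 0 := by decide
    refine cS _ (hg a b) _ (hg c d) _ (hg (-a - c) (-b - d)) ?_ ?_ ?_ ?_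
    · intro h
      have k0 := congrFun h 0
      have k1 := congrFun h 1
      exact hne ⟨k0, k1⟩
    · intro h
      have k0 : a = -a - c := congrFun h 0
      have k1 : b = -b - d := congrFun h 1
      exact hne (by clear * - k0 k1; revert a b c d; decide)
    · intro h
      have k0 : c = -a - c := congrFun h 0
      have k1 : d = -b - d := congrFun h 1
      exact hne (by clear * - k0 k1; revert a b c d; decide)
    · funext i; fin_cases i
      · simp
      · simp
      · simpa using h0
      · simpa using h30
  · apply Finset.eq_of_subset_of_card_le
    · intro v hv
      rw [mem_Sg] at hv
      rcases zmod3_cases (v 3) with k | k | k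
      · rw [if_pos k] at hv
        obtain ⟨v0, v1, v2⟩ := hv
        rcases zmod3_cases (v 2) with h | h | h
        · exact absurd h v2
        · convert h3; funext i; fin_cases i <;> simp [e3, *]
        · convert hn3; funext i; fin_cases i <;> simp [e3, *]; decide
      · rw [k, if_neg (by decide)] at hv
        simp only [one_mul] at hv
        convert hg (v 0) (v 1)
        funext i; fin_cases i <;> simp [*]
      · rw [k, if_neg (by decide)] at hv
        have h2 : (2 : ZMod 3) = -1 := by decide
        have := hS.neg_mem (hg (2 * v 0) (2 * v 1))
        rw [← hv] at this
        convert this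
        funext i; fin_cases i <;> simp [k, h2]
    · rw [hc, card_Sg]

open Classical in
lemma base_count :
    (Finset.univ.filter (fun S => Good S ∧ e3 ∈ S ∧ hcnt S e4 0 = 2)).card = 162 := by
  have h : Finset.univ.filter (fun S => Good S ∧ e3 ∈ S ∧ hcnt S e4 0 = 2)
      = (Finset.univ.filter LineOK).image Sg := by
    ext S
    simp only [Finset.mem_filter, Finset.mem_univ, true_and, Finset.mem_image]
    constructor
    · rintro ⟨a, b, c⟩
      exact exists_Sg a b c
    · rintro ⟨g, hg, rfl⟩
      exact ⟨good_Sg g hg, e3_mem_Sg g, hcnt_Sg g⟩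
  rw [h, Finset.card_image_of_injective _ Sg_injective]
  convert card_lineOK

/-- Linear equivalences act transitively on flags. -/
lemma exists_flag_equiv (f p : Fin 4 → ZMod 3) (hf : f ≠ 0) (hp : p ≠ 0) (hfp : f ⬝ᵥ p = 0) :
    ∃ e : (Fin 4 → ZMod 3) ≃ₗ[ZMod 3] (Fin 4 → ZMod 3), e e3 = p ∧ ∀ x, f ⬝ᵥ e x = x 3 := by
  obtain ⟨h, hh⟩ : ∃ h : Fin 4 → ZMod 3, h ⬝ᵥ p = 1 := by
    obtain ⟨i, hi⟩ := Function.ne_iff.mp hp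
    exact ⟨Pi.single i (p i)⁻¹, by rw [single_dotProduct]; exact inv_mul_cancel₀ hi⟩
  obtain ⟨q0, hq0⟩ : ∃ q : Fin 4 → ZMod 3, f ⬝ᵥ q = 1 := by
    obtain ⟨i, hi⟩ := Function.ne_iff.mp hf
    exact ⟨Pi.single i (f i)⁻¹, by rw [dotProduct_single]; exact mul_inv_cancel₀ hi⟩
  obtain ⟨q, hq, hhq⟩ : ∃ q : Fin 4 → ZMod 3, f ⬝ᵥ q = 1 ∧ h ⬝ᵥ q = 0 :=
    ⟨q0 - (h ⬝ᵥ q0) • p, by simp [dotProduct_sub, dotProduct_smul, hfp, hq0],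
      by simp [dotProduct_sub, dotProduct_smul, hh]⟩
  let L : (Fin 4 → ZMod 3) →ₗ[ZMod 3] (Fin 2 → ZMod 3) := Matrix.mulVecLin (Matrix.of ![h, f])
  have L0 : ∀ x, L x 0 = h ⬝ᵥ x := fun x => rfl
  have L1 : ∀ x, L x 1 = f ⬝ᵥ x := fun x => rfl
  have Lsurj : LinearMap.range L = ⊤ := by
    rw [LinearMap.range_eq_top]
    intro w
    refine ⟨w 0 • p + w 1 • q, ?_⟩
    funext i
    fin_cases i
    · simp [L0, dotProduct_add, dotProduct_smul, hh, hhq]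
    · simp [L1, dotProduct_add, dotProduct_smul, hfp, hq]
  have hrank := LinearMap.finrank_range_add_finrank_ker L
  rw [Lsurj] at hrank
  simp only [finrank_top, Module.finrank_fin_fun] at hrank
  have hrank2 : Module.finrank (ZMod 3) (Fin 2 → ZMod 3) =
      Module.finrank (ZMod 3) (LinearMap.ker L) := by
    simp only [Module.finrank_fin_fun]; omega
  let ψ := LinearEquiv.ofFinrankEq (R := ZMod 3) (Fin 2 → ZMod 3) (LinearMap.ker L) hrank2
  let M : (Fin 4 → ZMod 3) →ₗ[ZMod 3] (Fin 4 → ZMod 3) :=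
    (LinearMap.ker L).subtype ∘ₗ ψ.toLinearMap ∘ₗ
      LinearMap.funLeft (ZMod 3) (ZMod 3) (![0, 1] : Fin 2 → Fin 4)
    + (LinearMap.proj (R := ZMod 3) (φ := fun _ : Fin 4 => ZMod 3) 2).smulRight p
    + (LinearMap.proj (R := ZMod 3) (φ := fun _ : Fin 4 => ZMod 3) 3).smulRight q
  have hM : ∀ x, M x = (ψ (fun i => x ((![0, 1] : Fin 2 → Fin 4) i)) : Fin 4 → ZMod 3)
      + x 2 • p + x 3 • q := fun x => rfl
  have hk : ∀ u : LinearMap.ker L, h ⬝ᵥ (u : Fin 4 → ZMod 3) = 0 ∧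
      f ⬝ᵥ (u : Fin 4 → ZMod 3) = 0 := by
    intro u
    have := LinearMap.mem_ker.mp u.2
    exact ⟨congrFun this 0, congrFun this 1⟩
  have hMf : ∀ x, f ⬝ᵥ M x = x 3 := by
    intro x
    rw [hM]
    simp [dotProduct_add, dotProduct_smul, hfp, hq, hk]
  have hMh : ∀ x, h ⬝ᵥ M x = x 2 := by
    intro x
    rw [hM]
    simp [dotProduct_add, dotProduct_smul, hh, hhq, hk]
  have hinj : Function.Injective M := by
    rw [← LinearMap.ker_eq_bot, LinearMap.ker_eq_bot']
    intro x hx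
    have x3 : x 3 = 0 := by rw [← hMf x, hx, dotProduct_zero]
    have x2 : x 2 = 0 := by rw [← hMh x, hx, dotProduct_zero]
    rw [hM, x2, x3, zero_smul, zero_smul, add_zero, add_zero] at hx
    have h0 : ψ (fun i => x ((![0, 1] : Fin 2 → Fin 4) i)) = 0 := Subtype.ext hx
    rw [LinearEquiv.map_eq_zero_iff] at h0
    have x0 : x 0 = 0 := congrFun h0 0
    have x1 : x 1 = 0 := congrFun h0 1
    funext i; fin_cases i <;> simp [*]
  refine ⟨LinearEquiv.ofInjectiveEndo M hinj, ?_, ?_⟩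
  · rw [LinearEquiv.coe_ofInjectiveEndo, hM]
    have : (fun i => e3 ((![0, 1] : Fin 2 → Fin 4) i)) = 0 := by
      funext i; fin_cases i <;> rfl
    rw [this, map_zero]
    simp [e3]
  · intro x
    rw [LinearEquiv.coe_ofInjectiveEndo, hMf]

/-- transport of a set along a linear equivalence -/
def tr (e : (Fin 4 → ZMod 3) ≃ₗ[ZMod 3] (Fin 4 → ZMod 3)) (S : Finset (Fin 4 → ZMod 3)) :
    Finset (Fin 4 → ZMod 3) := S.map e.toEquiv.toEmbedding

lemma mem_tr (e : (Fin 4 → ZMod 3) ≃ₗ[ZMod 3] (Fin 4 → ZMod 3)) (S : Finset (Fin 4 → ZMod 3))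
    (x : Fin 4 → ZMod 3) : x ∈ tr e S ↔ e.symm x ∈ S := by
  rw [tr, Finset.mem_map_equiv]; rfl

lemma tr_tr (e : (Fin 4 → ZMod 3) ≃ₗ[ZMod 3] (Fin 4 → ZMod 3)) (S : Finset (Fin 4 → ZMod 3)) :
    tr e (tr e.symm S) = S := by
  ext x; simp [mem_tr]

lemma Good.tr {S : Finset (Fin 4 → ZMod 3)} (h : Good S)
    (e : (Fin 4 → ZMod 3) ≃ₗ[ZMod 3] (Fin 4 → ZMod 3)) : Good (tr e S) := by
  obtain ⟨h1, h2, h3⟩ := h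
  refine ⟨?_, by rw [_root_.tr, Finset.card_map, h2], ?_⟩
  · intro x hx y hy z hz hxy hxz hyz h0
    rw [mem_tr] at hx hy hz
    refine h1 _ hx _ hy _ hz (e.symm.injective.ne hxy) (e.symm.injective.ne hxz)
      (e.symm.injective.ne hyz) ?_
    rw [← map_add, ← map_add, h0, map_zero]
  · rw [_root_.tr, Finset.sum_map]
    have := congrArg e h3
    rw [map_sum, map_zero] at this
    exact this

lemma hcnt_tr (S : Finset (Fin 4 → ZMod 3)) (e : (Fin 4 → ZMod 3) ≃ₗ[ZMod 3] (Fin 4 → ZMod 3))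
    (f f' : Fin 4 → ZMod 3) (h : ∀ x, f ⬝ᵥ e x = f' ⬝ᵥ x) (c : ZMod 3) :
    hcnt (tr e S) f c = hcnt S f' c := by
  rw [hcnt, hcnt, tr, Finset.sum_map]
  apply Finset.sum_congr rfl
  intro x _
  rw [← h x]; rfl

open Classical in
lemma flag_count (f p : Fin 4 → ZMod 3) (hf : f ≠ 0) (hp : p ≠ 0) (hfp : f ⬝ᵥ p = 0) :
    (Finset.univ.filter (fun S => Good S ∧ p ∈ S ∧ hcnt S f 0 = 2)).card = 162 := by
  obtain ⟨e, he, hfe⟩ := exists_flag_equiv f p hf hp hfp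
  rw [← base_count]
  have hfe' : ∀ x, f ⬝ᵥ e x = e4 ⬝ᵥ x := fun x => by rw [hfe, e4_dot]
  have hfe'' : ∀ x, e4 ⬝ᵥ e.symm x = f ⬝ᵥ x := fun x => by
    rw [← hfe', LinearEquiv.apply_symm_apply]
  refine Finset.card_nbij' (tr e.symm) (tr e) ?_ ?_ ?_ ?_
  · intro S hS
    simp only [Finset.coe_filter, Finset.mem_univ, true_and, Set.mem_ofPred_eq] at hS ⊢
    refine ⟨hS.1.tr _, ?_, ?_⟩
    · rw [mem_tr, LinearEquiv.symm_symm, he]; exact hS.2.1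
    · rw [hcnt_tr S e.symm e4 f hfe'']; exact hS.2.2
  · intro S hS
    simp only [Finset.coe_filter, Finset.mem_univ, true_and, Set.mem_ofPred_eq] at hS ⊢
    refine ⟨hS.1.tr _, ?_, ?_⟩
    · rw [mem_tr, ← he, LinearEquiv.symm_apply_apply]; exact hS.2.1
    · rw [hcnt_tr S e f e4 hfe']; exact hS.2.2
  · intro S _
    exact tr_tr e S
  · intro S _
    exact tr_tr e.symm S

lemma flags_at (p : Fin 4 → ZMod 3) (hp : p ≠ 0) :
    ∑ f : Fin 4 → ZMod 3, (if f ≠ 0 ∧ f ⬝ᵥ p = 0 then (1 : ℤ) else 0) = 26 := by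
  have h := sum_ind p
  rw [if_neg hp] at h
  have h2 : ∀ f : Fin 4 → ZMod 3, (if f ≠ 0 ∧ f ⬝ᵥ p = 0 then (1 : ℤ) else 0)
      = (if f ⬝ᵥ p = 0 then 1 else 0) - if f = 0 then 1 else 0 := by
    intro f
    by_cases hf : f = 0
    · subst hf; simp
    · simp [hf]
  simp only [h2, Finset.sum_sub_distrib]
  simp only [Finset.sum_ite_eq', Finset.mem_univ, if_true]
  linarith

lemma flags_total : ∑ p : Fin 4 → ZMod 3, ∑ f : Fin 4 → ZMod 3,
    (if p ≠ 0 ∧ f ≠ 0 ∧ f ⬝ᵥ p = 0 then (162 : ℤ) else 0) = 336960 := by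
  have h : ∀ p : Fin 4 → ZMod 3, ∑ f : Fin 4 → ZMod 3,
      (if p ≠ 0 ∧ f ≠ 0 ∧ f ⬝ᵥ p = 0 then (162 : ℤ) else 0)
      = 162 * 26 * (1 - if p = 0 then 1 else 0) := by
    intro p
    by_cases hp : p = 0
    · simp [hp]
    · have h1 := flags_at p hp
      rw [if_neg hp, ← h1, mul_assoc, Finset.sum_mul, Finset.mul_sum]
      apply Finset.sum_congr rfl
      intro f _
      by_cases hc : f ≠ 0 ∧ f ⬝ᵥ p = 0
      · rw [if_pos ⟨hp, hc⟩, if_pos hc]; norm_num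
      · rw [if_neg (fun hh => hc hh.2), if_neg hc]; norm_num
  simp only [h]
  rw [← Finset.mul_sum, Finset.sum_sub_distrib]
  simp only [Finset.sum_ite_eq', Finset.mem_univ, if_true]
  simp [ZMod.card]

open Classical in
lemma card_good : (Finset.univ.filter Good).card = 8424 := by
  have key : ∑ S ∈ Finset.univ.filter Good, ∑ p : Fin 4 → ZMod 3, ∑ f : Fin 4 → ZMod 3,
      (if p ∈ S ∧ f ⬝ᵥ p = 0 ∧ hcnt S f 0 = 2 then (1 : ℤ) else 0)
      = ∑ S ∈ Finset.univ.filter Good, 40 := by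
    apply Finset.sum_congr rfl
    intro S hS
    have hS : Good S := by simpa using hS
    rw [Finset.sum_comm]
    have h : ∀ f : Fin 4 → ZMod 3, ∑ p : Fin 4 → ZMod 3,
        (if p ∈ S ∧ f ⬝ᵥ p = 0 ∧ hcnt S f 0 = 2 then (1 : ℤ) else 0)
        = 2 * if hcnt S f 0 = 2 then (1 : ℤ) else 0 := by
      intro f
      by_cases hc : hcnt S f 0 = 2
      · rw [if_pos hc, mul_one]
        conv_rhs => rw [← hc, hcnt]
        rw [← Finset.sum_filter_add_sum_filter_not Finset.univ (fun p => p ∈ S)]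
        rw [Finset.sum_eq_zero (s := Finset.univ.filter (fun p => ¬ p ∈ S)), add_zero]
        · have : Finset.univ.filter (fun p => p ∈ S) = S := by ext; simp
          rw [this]
          apply Finset.sum_congr rfl
          intro p hp
          simp [hp, hc]
        · intro p hp
          rw [Finset.mem_filter] at hp
          rw [if_neg (fun hh => hp.2 hh.1)]
      · simp [hc]
    simp only [h]
    rw [← Finset.mul_sum, hS.tangents]
    norm_num
  rw [Finset.sum_comm] at key
  have h2 : ∀ p : Fin 4 → ZMod 3, ∑ S ∈ Finset.univ.filter Good, ∑ f : Fin 4 → ZMod 3,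
      (if p ∈ S ∧ f ⬝ᵥ p = 0 ∧ hcnt S f 0 = 2 then (1 : ℤ) else 0)
      = ∑ f : Fin 4 → ZMod 3, (if p ≠ 0 ∧ f ≠ 0 ∧ f ⬝ᵥ p = 0 then (162 : ℤ) else 0) := by
    intro p
    rw [Finset.sum_comm]
    apply Finset.sum_congr rfl
    intro f _
    by_cases hc : p ≠ 0 ∧ f ≠ 0 ∧ f ⬝ᵥ p = 0
    · rw [if_pos hc]
      have := flag_count f p hc.2.1 hc.1 hc.2.2
      rw [← Finset.filter_filter, Finset.card_filter] at this
      have h3 : ((∑ S ∈ Finset.univ.filter Good, if p ∈ S ∧ hcnt S f 0 = 2 then 1 else 0 : ℕ) : ℤ)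
        = 162 := by exact_mod_cast this
      rw [← h3]
      push_cast
      apply Finset.sum_congr rfl
      intro S _
      simp [hc.2.2]
    · rw [if_neg hc]
      apply Finset.sum_eq_zero
      intro S hS
      have hS : Good S := by simpa using hS
      rw [if_neg]
      rintro ⟨h1, h2, h3⟩
      apply hc
      refine ⟨?_, ?_, h2⟩
      · rintro rfl
        exact hS.basic.1 h1
      · rintro rfl
        have := (hcnt_zero_fun S).1
        rw [hS.2.1] at this
        omega
  simp only [h2] at key
  rw [flags_total, Finset.sum_const, nsmul_eq_mul] at key
  have : (((Finset.univ.filter Good).card : ℕ) : ℤ) = 8424 := by linarith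
  exact_mod_cast this

lemma maximalCap_iff_good (S : Finset (Fin 4 → ZMod 3)) :
    (MaximalCap S ∧ ∑ x ∈ S, x = 0) ↔ Good S := by
  constructor
  · rintro ⟨⟨h1, h2⟩, h3⟩
    refine ⟨h1, le_antisymm (cap_bound_four S h1) ?_, h3⟩
    have hpos : (Finset.univ.filter LineOK).Nonempty := by
      rw [← Finset.card_pos, card_lineOK]; norm_num
    obtain ⟨g, hg⟩ := hpos
    rw [Finset.mem_filter] at hg
    rw [← card_Sg g]
    exact h2 _ (isCap_Sg g hg.2)
  · rintro ⟨h1, h2, h3⟩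
    exact ⟨⟨h1, fun D hD => h2 ▸ cap_bound_four D hD⟩, h3⟩

/-- There are exactly 8424 maximal caps in `AG(4,3)` whose anchor `-∑ x ∈ S, x` is the
zero vector (equivalently, whose points sum to zero). -/
theorem card_maximal_caps_AG43_anchor_zero :
    Nat.card {S : Finset (Fin 4 → ZMod 3) // MaximalCap S ∧ ∑ x ∈ S, x = 0} = 8424 := by
  classical
  rw [← card_good]
  exact Nat.subtype_card _ (fun S => by rw [maximalCap_iff_good]; simp)
end
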